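/- Let (x̃_i, ζ_i, ϑ_i) be a sequence with x̃_i ∈ PL(𝒫_i, ℝⁿ), ζ_i ∈ ℝ^q and ϑ_i ∈ S such that lim_{i→∞} (‖x̃_i − x‖_{W²} + |ζ_i − z₀| + |ϑ_i − θ|) = 0 for some x ∈ W²_n, z₀ ∈ ℝ^q and θ ∈ S. Then lim_{i→∞} ℓ̃_i(x̃_i, ζ_i, ϑ_i) = ℓ_e(x, z₀, θ) in ℝ̄. -/

import Mathlib

open MeasureTheory Filter Set

/-- `ln` with values in `ℝ̄ = EReal` and `ln 0 := −∞`. -/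
noncomputable def elog (r : ℝ) : EReal := if r ≤ 0 then ⊥ else ((Real.log r : ℝ) : EReal)

/-!
By the Cauchy–Schwarz inequality, convergence in `W²` forces uniform convergence of the paths. The
Euler paths `z̃ᵢ` then follow the solution `z` by a discrete Grönwall inequality: continuity of `h`
is uniform near the compact set of points `(s, x s, z s + w, θ)` with `‖w‖ ≤ r`, and the Grönwall
bound itself keeps the error below `r`. Hence the drift sampled at the left nodes converges
uniformly. The discrete energy is the squared `L²` norm of a step function, namely `G⁻¹` applied to
the derivative of `x̃ᵢ` minus the sampled drift, and that step function converges in `L²`. Finally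
`ln` is continuous into `ℝ̄` and never takes the value `+∞`, so no `∞ - ∞` arises in the limit.
-/

open scoped Topology NNReal ENNReal

section ExtendedLog

lemma elog_eq_log_ofReal (r : ℝ) : elog r = ENNReal.log (ENNReal.ofReal r) :=
  (ENNReal.log_ofReal r).symm

lemma continuous_elog : Continuous elog := by
  rw [funext elog_eq_log_ofReal]
  exact ENNReal.continuous_log.comp ENNReal.continuous_ofReal

lemma elog_ne_top (r : ℝ) : elog r ≠ ⊤ := by
  unfold elog
  split_ifs <;> simp

lemma tendsto_elog_add_elog_sub_coe {ι : Type*} {l : Filter ι} {a b c : ι → ℝ} {a₀ b₀ c₀ : ℝ}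
    (ha : Tendsto a l (𝓝 a₀)) (hb : Tendsto b l (𝓝 b₀)) (hc : Tendsto c l (𝓝 c₀)) :
    Tendsto (fun i => elog (a i) + elog (b i) - (c i : EReal)) l
      (𝓝 (elog a₀ + elog b₀ - (c₀ : EReal))) := by
  have hlog : Tendsto (fun i => elog (a i) + elog (b i)) l (𝓝 (elog a₀ + elog b₀)) :=
    (EReal.continuousAt_add (p := (elog a₀, elog b₀)) (.inl (elog_ne_top _))
      (.inr (elog_ne_top _))).tendsto.comp
      (((continuous_elog.tendsto a₀).comp ha).prodMk_nhds ((continuous_elog.tendsto b₀).comp hb))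
  have hneg : Tendsto (fun i => -(c i : EReal)) l (𝓝 (-(c₀ : EReal))) :=
    (continuous_coe_real_ereal.tendsto c₀).comp hc |>.neg
  exact (EReal.continuousAt_add (p := (elog a₀ + elog b₀, -(c₀ : EReal))) (.inr (by simp))
    (.inr (by simp))).tendsto.comp (hlog.prodMk_nhds hneg)

end ExtendedLog

section SquareIntegrable

variable {α ι E : Type*} [MeasurableSpace α] {μ : Measure α} [NormedAddCommGroup E]

lemma lpNorm_two_sq {g : α → E} (hg : AEStronglyMeasurable g μ) :
    lpNorm g 2 μ ^ 2 = ∫ a, ‖g a‖ ^ 2 ∂μ := by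
  rw [lpNorm_eq_integral_norm_rpow_toReal two_ne_zero ENNReal.ofNat_ne_top hg]
  simp [← Real.sqrt_eq_rpow, ← one_div, Real.sq_sqrt (integral_nonneg fun a => sq_nonneg ‖g a‖)]

lemma integral_norm_le_sqrt_mul_lpNorm_two [IsFiniteMeasure μ] {g : α → E} (hg : MemLp g 2 μ) :
    ∫ a, ‖g a‖ ∂μ ≤ √(μ.real univ) * lpNorm g 2 μ := by
  have hle := eLpNorm_le_eLpNorm_mul_rpow_measure_univ (p := 1) one_le_two hg.1
  have hfin : eLpNorm g 2 μ * μ univ ^ (1 / (1 : ℝ≥0∞).toReal - 1 / (2 : ℝ≥0∞).toReal) ≠ ∞ :=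
    ENNReal.mul_ne_top hg.2.ne (ENNReal.rpow_ne_top_of_nonneg (by norm_num) (measure_ne_top _ _))
  rw [← lpNorm_one_eq_integral_norm hg.1, ← toReal_eLpNorm hg.1, ← toReal_eLpNorm hg.1, mul_comm]
  refine (ENNReal.toReal_mono hfin hle).trans_eq ?_
  rw [ENNReal.toReal_mul, ← ENNReal.toReal_rpow, Real.sqrt_eq_rpow, Measure.real]
  norm_num

lemma tendsto_integral_norm_sq_of_lpNorm_sub {l : Filter ι} {v : ι → α → E} {u : α → E}
    (hv : ∀ i, MemLp (v i) 2 μ) (hu : MemLp u 2 μ)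
    (hvu : Tendsto (fun i => lpNorm (v i - u) 2 μ) l (𝓝 0)) :
    Tendsto (fun i => ∫ a, ‖v i a‖ ^ 2 ∂μ) l (𝓝 (∫ a, ‖u a‖ ^ 2 ∂μ)) := by
  have hdiff : ∀ i, |lpNorm (v i) 2 μ - lpNorm u 2 μ| ≤ lpNorm (v i - u) 2 μ := fun i =>
    abs_sub_le_iff.2
      ⟨sub_le_iff_le_add'.2 (lpNorm_le_lpNorm_add_lpNorm_sub' hu one_le_two),
        sub_le_iff_le_add'.2 (lpNorm_le_lpNorm_add_lpNorm_sub (hv i) one_le_two)⟩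
  have hlim : Tendsto (fun i => lpNorm (v i) 2 μ) l (𝓝 (lpNorm u 2 μ)) :=
    tendsto_iff_norm_sub_tendsto_zero.2 (squeeze_zero (fun _ => norm_nonneg _) hdiff hvu)
  simpa only [lpNorm_two_sq (hv _).1, lpNorm_two_sq hu.1] using hlim.pow 2

lemma lpNorm_le_of_ae_norm_le [IsFiniteMeasure μ] {p : ℝ≥0∞} {g : α → E} {C : ℝ} (hC : 0 ≤ C)
    (hg : ∀ᵐ a ∂μ, ‖g a‖ ≤ C) : lpNorm g p μ ≤ μ.real univ ^ p.toReal⁻¹ * C := by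
  by_cases hm : AEStronglyMeasurable g μ
  · rw [← toReal_eLpNorm hm, Measure.real, ENNReal.toReal_rpow, ← ENNReal.toReal_ofReal hC,
      ← ENNReal.toReal_mul]
    exact ENNReal.toReal_mono (ENNReal.mul_ne_top (ENNReal.rpow_ne_top_of_nonneg (by positivity)
      (measure_ne_top _ _)) ENNReal.ofReal_ne_top) (eLpNorm_le_of_ae_bound hg)
  · rw [lpNorm_of_not_aestronglyMeasurable hm]
    positivity

lemma tendsto_lpNorm_sub_of_tendstoUniformlyOn {l : Filter ι} {s : Set α} (hs : MeasurableSet s)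
    (hμs : μ s ≠ ∞) (p : ℝ≥0∞) {F : ι → α → E} {f : α → E} (hF : TendstoUniformlyOn F f l s) :
    Tendsto (fun i => lpNorm (F i - f) p (μ.restrict s)) l (𝓝 0) := by
  have : IsFiniteMeasure (μ.restrict s) := isFiniteMeasure_restrict.2 hμs
  set c : ℝ := (μ.restrict s).real univ ^ p.toReal⁻¹
  have : 0 ≤ c := by positivity
  refine Metric.tendsto_nhds.2 fun ε hε => ?_
  filter_upwards [Metric.tendstoUniformlyOn_iff.1 hF (ε / (c + 1)) (by positivity)] with i hi
  have hbound : ∀ᵐ a ∂μ.restrict s, ‖(F i - f) a‖ ≤ ε / (c + 1) :=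
    (ae_restrict_iff' hs).2 <| .of_forall fun a ha => by
      simpa only [dist_comm, dist_eq_norm, Pi.sub_apply] using (hi a ha).le
  rw [dist_zero_right, Real.norm_of_nonneg lpNorm_nonneg]
  calc lpNorm (F i - f) p (μ.restrict s) ≤ c * (ε / (c + 1)) :=
        lpNorm_le_of_ae_norm_le (by positivity) hbound
    _ < ε := by rw [mul_div_assoc', div_lt_iff₀ (by positivity)]; nlinarith

lemma lpNorm_clm_comp_le {𝕜 E' : Type*} [NontriviallyNormedField 𝕜] [NormedSpace 𝕜 E]
    [NormedAddCommGroup E'] [NormedSpace 𝕜 E'] (A : E →L[𝕜] E') {p : ℝ≥0∞} {g : α → E}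
    (hg : MemLp g p μ) : lpNorm (fun a => A (g a)) p μ ≤ ‖A‖ * lpNorm g p μ := by
  have h := lpNorm_mono_real (p := p) (μ := μ) (f := fun a => A (g a)) (g := ‖A‖ • fun a => ‖g a‖)
    (hg.norm.const_smul _) fun a => A.le_opNorm (g a)
  rwa [lpNorm_const_smul, coe_nnnorm, norm_norm, lpNorm_norm hg.1] at h

lemma tendsto_integral_norm_sq_clm_sub {𝕜 E' : Type*} [NontriviallyNormedField 𝕜]
    [NormedSpace 𝕜 E] [NormedAddCommGroup E'] [NormedSpace 𝕜 E'] (A : E →L[𝕜] E') {l : Filter ι}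
    {v w : ι → α → E} {v₀ w₀ : α → E} (hv : ∀ i, MemLp (v i) 2 μ) (hv₀ : MemLp v₀ 2 μ)
    (hvlim : Tendsto (fun i => lpNorm (v i - v₀) 2 μ) l (𝓝 0))
    (hw : ∀ i, MemLp (w i) 2 μ) (hw₀ : MemLp w₀ 2 μ)
    (hwlim : Tendsto (fun i => lpNorm (w i - w₀) 2 μ) l (𝓝 0)) :
    Tendsto (fun i => ∫ a, ‖A (v i a - w i a)‖ ^ 2 ∂μ) l (𝓝 (∫ a, ‖A (v₀ a - w₀ a)‖ ^ 2 ∂μ)) := by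
  have hbound : ∀ i, lpNorm ((fun a => A (v i a - w i a)) - fun a => A (v₀ a - w₀ a)) 2 μ
      ≤ ‖A‖ * (lpNorm (v i - v₀) 2 μ + lpNorm (w i - w₀) 2 μ) := fun i => by
    have hsplit : ((fun a => A (v i a - w i a)) - fun a => A (v₀ a - w₀ a))
        = fun a => A (((v i - v₀) - (w i - w₀)) a) := by
      funext a
      simp only [Pi.sub_apply, ← map_sub, sub_sub_sub_comm]
    rw [hsplit]
    refine (lpNorm_clm_comp_le A (((hv i).sub hv₀).sub ((hw i).sub hw₀))).trans ?_
    gcongr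
    exact lpNorm_sub_le ((hv i).sub hv₀) one_le_two
  refine tendsto_integral_norm_sq_of_lpNorm_sub (fun i => A.comp_memLp' ((hv i).sub (hw i)))
    (A.comp_memLp' (hv₀.sub hw₀)) (squeeze_zero (fun _ => lpNorm_nonneg) hbound ?_)
  simpa using (hvlim.add hwlim).const_mul ‖A‖

end SquareIntegrable

section UniformConvergence

variable {α β γ ι : Type*} {l : Filter ι} {s : Set α}

lemma tendstoUniformlyOn_prodMk [UniformSpace β] [UniformSpace γ] {F : ι → α → β} {f : α → β}
    {G : ι → α → γ} {g : α → γ} (hF : TendstoUniformlyOn F f l s)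
    (hG : TendstoUniformlyOn G g l s) :
    TendstoUniformlyOn (fun i a => (F i a, G i a)) (fun a => (f a, g a)) l s :=
  fun u hu => ((hF.prodMk hG) u hu).diag_of_prod

lemma tendstoUniformlyOn_continuous_comp [UniformSpace β] [UniformSpace γ] {g : β → γ}
    (hg : Continuous g) {K : Set β} (hK : IsCompact K) {F : ι → α → β} {f : α → β}
    (hf : MapsTo f s K) (hF : TendstoUniformlyOn F f l s) :
    TendstoUniformlyOn (fun i a => g (F i a)) (fun a => g (f a)) l s := by
  intro r hr
  filter_upwards [hF _ (hK.uniformContinuousAt_of_continuousAt g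
    (fun _ _ => hg.continuousAt) hr)] with i hi a ha
  exact hi a ha (hf ha)

lemma tendstoUniformlyOn_comp_of_tendstoUniformlyOn_id [UniformSpace α] [UniformSpace β]
    {F : ι → α → β} {f : α → β} (hF : TendstoUniformlyOn F f l s) (hf : UniformContinuousOn f s)
    {τ : ι → α → α} (hτs : ∀ᶠ i in l, MapsTo (τ i) s s) (hτ : TendstoUniformlyOn τ id l s) :
    TendstoUniformlyOn (fun i a => F i (τ i a)) f l s := by
  intro u hu
  obtain ⟨v, hv, hvu⟩ := comp_mem_uniformity_sets hu
  filter_upwards [hf.comp_tendstoUniformlyOn_eventually hτs (fun _ => id) hτ v hv, hF v hv, hτs]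
    with i hfτ hFf hmaps a ha
  exact hvu ⟨f (τ i a), hfτ a ha, hFf _ (hmaps ha)⟩

lemma tendstoUniformlyOn_of_tendsto_bound [PseudoMetricSpace β] {F : ι → α → β} {f : α → β}
    {b : ι → ℝ} (hb : Tendsto b l (𝓝 0)) (hF : ∀ i, ∀ a ∈ s, dist (F i a) (f a) ≤ b i) :
    TendstoUniformlyOn F f l s := by
  refine Metric.tendstoUniformlyOn_iff.2 fun ε hε => ?_
  filter_upwards [hb.eventually_lt_const hε] with i hi a ha
  exact (dist_comm _ _).trans_lt ((hF i a ha).trans_lt hi)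

end UniformConvergence

section Partition

/-- `t 0 < ⋯ < t N` is a partition of `[0, T]`. The nodes are indexed by `ℕ`; the values `t k` with
`N < k` are irrelevant. -/
structure IsPartition (t : ℕ → ℝ) (N : ℕ) (T : ℝ) : Prop where
  zero_eq : t 0 = 0
  last_eq : t N = T
  lt_succ : ∀ k < N, t k < t (k + 1)

/-- The mesh of a partition: the length of its longest interval. -/
noncomputable def mesh (t : ℕ → ℝ) (N : ℕ) : ℝ := ⨆ k : Fin N, (t (k.1 + 1) - t k.1)

/-- The last node of a partition which does not exceed `s`, at which the Euler scheme evaluates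
vector fields. At the right endpoint it is the endpoint itself. -/
noncomputable def leftNode (t : ℕ → ℝ) (N : ℕ) (s : ℝ) : ℝ :=
  t (Nat.findGreatest (fun k => t k ≤ s) N)

/-- `g` is constant on each half-open interval of the partition `t 0 < ⋯ < t N`. -/
def IsStep {β : Type*} (t : ℕ → ℝ) (N : ℕ) (g : ℝ → β) : Prop :=
  ∀ k < N, ∀ s ∈ Ico (t k) (t (k + 1)), g s = g (t k)

lemma isStep_of_forall_exists_eq {β : Type*} {t : ℕ → ℝ} {N : ℕ} {g : ℝ → β}
    (hg : ∀ k < N, ∃ b, ∀ s ∈ Ico (t k) (t (k + 1)), g s = b) : IsStep t N g := fun k hk s hs => by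
  obtain ⟨b, hb⟩ := hg k hk
  rw [hb s hs, hb (t k) ⟨le_rfl, hs.1.trans_lt hs.2⟩]

lemma sub_le_mesh (t : ℕ → ℝ) {N k : ℕ} (hk : k < N) : t (k + 1) - t k ≤ mesh t N :=
  le_ciSup (f := fun k : Fin N => t (k.1 + 1) - t k.1) (finite_range _).bddAbove ⟨k, hk⟩

namespace IsPartition

variable {t : ℕ → ℝ} {N : ℕ} {T : ℝ}

lemma monotoneOn (ht : IsPartition t N T) : MonotoneOn t (Iic N) :=
  monotoneOn_of_le_succ ordConnected_Iic fun k _ _ hk => (ht.lt_succ k hk).le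

lemma node_mem_Icc (ht : IsPartition t N T) {k : ℕ} (hk : k ≤ N) : t k ∈ Icc 0 T :=
  ⟨ht.zero_eq ▸ ht.monotoneOn N.zero_le hk k.zero_le,
    ht.last_eq ▸ ht.monotoneOn hk (mem_Iic.2 le_rfl) hk⟩

lemma Icc_node_subset (ht : IsPartition t N T) {k : ℕ} (hk : k < N) :
    Icc (t k) (t (k + 1)) ⊆ Icc 0 T :=
  Icc_subset_Icc (ht.node_mem_Icc hk.le).1 (ht.node_mem_Icc hk).2

lemma induction_on (ht : IsPartition t N T) {p : ℝ → Prop} (zero : p 0)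
    (step : ∀ k < N, p (t k) → ∀ s ∈ Ioc (t k) (t (k + 1)), p s) {s : ℝ} (hs : s ∈ Icc 0 T) :
    p s := by
  suffices h : ∀ k ≤ N, ∀ s ∈ Icc 0 (t k), p s from h N le_rfl s (ht.last_eq.symm ▸ hs)
  intro k
  induction k with
  | zero =>
    intro _ s hs
    rw [ht.zero_eq, Icc_self] at hs
    exact hs ▸ zero
  | succ k ih =>
    intro hk s hs
    have ih := ih (Nat.le_of_succ_le hk)
    rcases le_or_gt s (t k) with hsk | hsk
    · exact ih s ⟨hs.1, hsk⟩
    · exact step k hk (ih (t k) ⟨(ht.node_mem_Icc (Nat.le_of_succ_le hk)).1, le_rfl⟩) s ⟨hsk, hs.2⟩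

lemma exists_mem_Ico (ht : IsPartition t N T) {s : ℝ} (hs : s ∈ Ico 0 T) :
    ∃ k < N, s ∈ Ico (t k) (t (k + 1)) := by
  set k := Nat.findGreatest (fun k => t k ≤ s) N
  have hk : t k ≤ s := Nat.findGreatest_spec (P := fun k => t k ≤ s) N.zero_le
    (ht.zero_eq.trans_le hs.1)
  have hkN : k < N := (Nat.findGreatest_le N).lt_of_ne fun hkN : k = N =>
    hs.2.not_ge (by rwa [hkN, ht.last_eq] at hk)
  exact ⟨k, hkN, hk, not_le.1 (Nat.findGreatest_is_greatest k.lt_succ_self hkN)⟩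

lemma leftNode_eq (ht : IsPartition t N T) {k : ℕ} (hk : k < N) {s : ℝ}
    (hs : s ∈ Ico (t k) (t (k + 1))) : leftNode t N s = t k := by
  have hfind : Nat.findGreatest (fun k => t k ≤ s) N = k :=
    Nat.findGreatest_eq_iff.2 ⟨hk.le, fun _ => hs.1, fun j hkj hjN =>
      (hs.2.trans_le (ht.monotoneOn hk hjN hkj)).not_ge⟩
  rw [leftNode, hfind]

lemma leftNode_last (ht : IsPartition t N T) : leftNode t N T = T := by
  have hfind : Nat.findGreatest (fun k => t k ≤ T) N = N :=
    Nat.findGreatest_eq_iff.2 ⟨le_rfl, fun _ => ht.last_eq.le, fun _ hj hj' => absurd hj' hj.not_ge⟩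
  rw [leftNode, hfind, ht.last_eq]

lemma leftNode_mem_Icc (ht : IsPartition t N T) (s : ℝ) : leftNode t N s ∈ Icc 0 T :=
  ht.node_mem_Icc (Nat.findGreatest_le N)

lemma isStep_leftNode (ht : IsPartition t N T) : IsStep t N (leftNode t N) := fun k hk s hs => by
  rw [ht.leftNode_eq hk hs, ht.leftNode_eq hk ⟨le_rfl, ht.lt_succ k hk⟩]

lemma mesh_nonneg (ht : IsPartition t N T) : 0 ≤ mesh t N :=
  Real.iSup_nonneg fun k => sub_nonneg.2 (ht.lt_succ k k.2).le

lemma dist_leftNode_le (ht : IsPartition t N T) {s : ℝ} (hs : s ∈ Icc 0 T) :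
    dist (leftNode t N s) s ≤ mesh t N := by
  rcases hs.2.eq_or_lt with rfl | hsT
  · simpa only [ht.leftNode_last, dist_self] using ht.mesh_nonneg
  · obtain ⟨k, hk, hks⟩ := ht.exists_mem_Ico ⟨hs.1, hsT⟩
    rw [ht.leftNode_eq hk hks, dist_comm, Real.dist_eq, abs_of_nonneg (sub_nonneg.2 hks.1)]
    exact (sub_le_sub_right hks.2.le _).trans (sub_le_mesh t hk)

lemma continuousOn_Icc (ht : IsPartition t N T) {β : Type*} [TopologicalSpace β] {y : ℝ → β}
    (hy : ∀ k < N, ContinuousOn y (Icc (t k) (t (k + 1)))) : ContinuousOn y (Icc 0 T) := by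
  suffices h : ∀ k ≤ N, ContinuousOn y (Icc 0 (t k)) from ht.last_eq ▸ h N le_rfl
  intro k
  induction k with
  | zero => intro _; simp [ht.zero_eq]
  | succ k ih =>
    intro hk
    rw [← Icc_union_Icc_eq_Icc (ht.node_mem_Icc (Nat.le_of_succ_le hk)).1 (ht.lt_succ k hk).le]
    exact (ih (Nat.le_of_succ_le hk)).union_of_isClosed (hy k hk) isClosed_Icc isClosed_Icc

end IsPartition

lemma tendstoUniformlyOn_leftNode {ι : Type*} {l : Filter ι} {t : ι → ℕ → ℝ} {N : ι → ℕ} {T : ℝ}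
    (ht : ∀ i, IsPartition (t i) (N i) T) (hmesh : Tendsto (fun i => mesh (t i) (N i)) l (𝓝 0)) :
    TendstoUniformlyOn (fun i => leftNode (t i) (N i)) id l (Icc 0 T) :=
  tendstoUniformlyOn_of_tendsto_bound hmesh fun i _ hs => (ht i).dist_leftNode_le hs

namespace IsStep

variable {t : ℕ → ℝ} {N : ℕ} {T : ℝ} {E β γ δ : Type*}

lemma comp {g : ℝ → β} (hg : IsStep t N g) (φ : β → γ) : IsStep t N (fun s => φ (g s)) :=
  fun k hk s hs => congrArg φ (hg k hk s hs)

lemma comp₂ {g : ℝ → β} {g' : ℝ → γ} (hg : IsStep t N g) (hg' : IsStep t N g')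
    (φ : β → γ → δ) : IsStep t N (fun s => φ (g s) (g' s)) :=
  fun k hk s hs => congrArg₂ φ (hg k hk s hs) (hg' k hk s hs)

variable [NormedAddCommGroup E] {g : ℝ → E}

lemma intervalIntegrable_piece (hg : IsStep t N g) {k : ℕ} (hk : k < N) (htk : t k ≤ t (k + 1)) :
    IntervalIntegrable g volume (t k) (t (k + 1)) :=
  (intervalIntegrable_const (c := g (t k))).congr_uIoo fun s hs => by
    rw [uIoo_of_le htk] at hs
    exact (hg k hk s (Ioo_subset_Ico_self hs)).symm

lemma integrableOn (hg : IsStep t N g) (ht : IsPartition t N T) : IntegrableOn g (Ioc 0 T) := by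
  have h := IntervalIntegrable.trans_iterate (a := t) fun k hk =>
    hg.intervalIntegrable_piece hk (ht.lt_succ k hk).le
  rw [ht.zero_eq, ht.last_eq] at h
  exact h.1

lemma memLp_two (hg : IsStep t N g) (ht : IsPartition t N T) :
    MemLp g 2 (volume.restrict (Ioc 0 T)) :=
  (memLp_two_iff_integrable_sq_norm (hg.integrableOn ht).1).2
    ((hg.comp fun v => ‖v‖ ^ 2).integrableOn ht)

variable [NormedSpace ℝ E] [CompleteSpace E]

lemma integral_piece (hg : IsStep t N g) {k : ℕ} (hk : k < N) (htk : t k ≤ t (k + 1)) :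
    ∫ s in t k..t (k + 1), g s = (t (k + 1) - t k) • g (t k) := by
  rw [intervalIntegral.integral_congr_Ioo_of_le htk fun s hs => hg k hk s (Ioo_subset_Ico_self hs),
    intervalIntegral.integral_const]

lemma setIntegral_eq_sum (hg : IsStep t N g) (ht : IsPartition t N T) :
    ∫ s in Ioc 0 T, g s = ∑ k ∈ Finset.range N, (t (k + 1) - t k) • g (t k) := by
  have hT : 0 ≤ T := ht.last_eq ▸ (ht.node_mem_Icc le_rfl).1
  rw [← intervalIntegral.integral_of_le hT]
  calc ∫ s in (0)..T, g s = ∫ s in t 0..t N, g s := by rw [ht.zero_eq, ht.last_eq]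
    _ = ∑ k ∈ Finset.range N, ∫ s in t k..t (k + 1), g s :=
      (intervalIntegral.sum_integral_adjacent_intervals (a := t) fun k hk =>
        hg.intervalIntegrable_piece hk (ht.lt_succ k hk).le).symm
    _ = ∑ k ∈ Finset.range N, (t (k + 1) - t k) • g (t k) :=
      Finset.sum_congr rfl fun k hk => have hk := Finset.mem_range.1 hk
        hg.integral_piece hk (ht.lt_succ k hk).le

end IsStep

end Partition

section Primitive

variable {ι E : Type*} [NormedAddCommGroup E] {T : ℝ}

/-- The `W²` norm of a path `y` with derivative `y'` on `[0, T]`. -/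
noncomputable def w2Norm (T : ℝ) (y y' : ℝ → E) : ℝ :=
  √(‖y 0‖ ^ 2 + ∫ s in Ioc 0 T, ‖y' s‖ ^ 2)

lemma norm_zero_le_w2Norm (T : ℝ) (y y' : ℝ → E) : ‖y 0‖ ≤ w2Norm T y y' :=
  Real.le_sqrt_of_sq_le (le_add_of_nonneg_right (integral_nonneg fun _ => sq_nonneg _))

lemma lpNorm_two_le_w2Norm (y : ℝ → E) {y' : ℝ → E}
    (hy' : AEStronglyMeasurable y' (volume.restrict (Ioc 0 T))) :
    lpNorm y' 2 (volume.restrict (Ioc 0 T)) ≤ w2Norm T y y' :=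
  Real.le_sqrt_of_sq_le (by rw [lpNorm_two_sq hy']; exact le_add_of_nonneg_left (sq_nonneg _))

variable [NormedSpace ℝ E]

/-- `y` is the primitive on `[0, T]` of `y'` with initial value `y₀`. An absolutely continuous path
is encoded by its derivative in this way, and the solution of an ODE `ẏ = v(s, y)` by
`y' s = v s (y s)`. -/
def IsPrimitive (T : ℝ) (y₀ : E) (y y' : ℝ → E) : Prop :=
  ∀ s ∈ Icc 0 T, y s = y₀ + ∫ u in Ioc 0 s, y' u

namespace IsPrimitive

variable {y₀ : E} {y y' : ℝ → E}

lemma apply_zero (hy : IsPrimitive T y₀ y y') (hT : 0 ≤ T) : y 0 = y₀ := by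
  simpa using hy 0 ⟨le_rfl, hT⟩

lemma sub_eq_integral (hy : IsPrimitive T y₀ y y') (hy' : IntegrableOn y' (Ioc 0 T)) {a b : ℝ}
    (ha : a ∈ Icc 0 T) (hb : b ∈ Icc 0 T) : y b - y a = ∫ u in a..b, y' u := by
  have hint : ∀ c ∈ Icc 0 T, IntervalIntegrable y' volume 0 c := fun c hc =>
    (intervalIntegrable_iff_integrableOn_Ioc_of_le hc.1).2
      (hy'.mono_set (Ioc_subset_Ioc_right hc.2))
  rw [hy a ha, hy b hb, add_sub_add_left_eq_sub, ← intervalIntegral.integral_of_le ha.1,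
    ← intervalIntegral.integral_of_le hb.1,
    intervalIntegral.integral_interval_sub_left (hint b hb) (hint a ha)]

lemma continuousOn (hy : IsPrimitive T y₀ y y') (hy' : IntegrableOn y' (Ioc 0 T)) :
    ContinuousOn y (Icc 0 T) :=
  (continuousOn_const.add (intervalIntegral.continuousOn_primitive
    ((integrableOn_Icc_iff_integrableOn_Ioc enorm_ne_top).2 hy'))).congr hy

lemma sub {w₀ : E} {w w' : ℝ → E} (hy : IsPrimitive T y₀ y y') (hw : IsPrimitive T w₀ w w')
    (hy' : IntegrableOn y' (Ioc 0 T)) (hw' : IntegrableOn w' (Ioc 0 T)) :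
    IsPrimitive T (y₀ - w₀) (y - w) (y' - w') := by
  intro s hs
  have hsub : Ioc 0 s ⊆ Ioc 0 T := Ioc_subset_Ioc_right hs.2
  simp only [Pi.sub_apply]
  rw [hy s hs, hw s hs, integral_sub (hy'.mono_set hsub) (hw'.mono_set hsub)]
  abel

lemma norm_le_w2Norm (hy : IsPrimitive T (y 0) y y')
    (hy' : MemLp y' 2 (volume.restrict (Ioc 0 T))) {s : ℝ} (hs : s ∈ Icc 0 T) :
    ‖y s‖ ≤ (1 + √T) * w2Norm T y y' := by
  have hint : IntegrableOn (fun u => ‖y' u‖) (Ioc 0 T) := (hy'.integrable one_le_two).norm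
  have hvol : (volume.restrict (Ioc 0 T)).real univ = T := by simp [hs.1.trans hs.2]
  calc ‖y s‖ ≤ ‖y 0‖ + ‖∫ u in Ioc 0 s, y' u‖ := (hy s hs).symm ▸ norm_add_le _ _
    _ ≤ ‖y 0‖ + ∫ u in Ioc 0 s, ‖y' u‖ := by gcongr; exact norm_integral_le_integral_norm _
    _ ≤ ‖y 0‖ + ∫ u in Ioc 0 T, ‖y' u‖ := by
      grw [setIntegral_mono_set hint (.of_forall fun _ => norm_nonneg _)
        (Ioc_subset_Ioc_right hs.2).eventuallyLE]
    _ ≤ ‖y 0‖ + √T * lpNorm y' 2 (volume.restrict (Ioc 0 T)) := by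
      simpa only [hvol] using add_le_add_right (integral_norm_le_sqrt_mul_lpNorm_two hy') _
    _ ≤ w2Norm T y y' + √T * w2Norm T y y' := by
      gcongr
      exacts [norm_zero_le_w2Norm T y y', lpNorm_two_le_w2Norm y hy'.1]
    _ = (1 + √T) * w2Norm T y y' := by ring

lemma tendstoUniformlyOn_of_w2Norm {l : Filter ι} {w w' : ι → ℝ → E}
    (hw : ∀ i, IsPrimitive T (w i 0) (w i) (w' i)) (hy : IsPrimitive T (y 0) y y')
    (hw' : ∀ i, MemLp (w' i) 2 (volume.restrict (Ioc 0 T)))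
    (hy' : MemLp y' 2 (volume.restrict (Ioc 0 T)))
    (hlim : Tendsto (fun i => w2Norm T (w i - y) (w' i - y')) l (𝓝 0)) :
    TendstoUniformlyOn w y l (Icc 0 T) :=
  tendstoUniformlyOn_of_tendsto_bound (by simpa using hlim.const_mul (1 + √T)) fun i s hs => by
    simpa only [dist_eq_norm, Pi.sub_apply] using
      ((hw i).sub hy ((hw' i).integrable one_le_two)
        (hy'.integrable one_le_two)).norm_le_w2Norm ((hw' i).sub hy') hs

end IsPrimitive

end Primitive

section Euler

/-- The bound being proved itself keeps `e` below `r`, so `hstep` stays available at every node. -/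
lemma IsPartition.le_exp_mul_of_step {t : ℕ → ℝ} {N : ℕ} {T : ℝ} (ht : IsPartition t N T)
    {e : ℝ → ℝ} {L ρ r : ℝ} (hL : 0 ≤ L) (hρ : 0 ≤ ρ) (he : 0 ≤ e 0)
    (hr : Real.exp (L * T) * (e 0 + ρ * T) ≤ r)
    (hstep : ∀ k < N, e (t k) ≤ r → ∀ s ∈ Ioc (t k) (t (k + 1)),
      e s ≤ e (t k) + (s - t k) * (ρ + L * e (t k))) {s : ℝ} (hs : s ∈ Icc 0 T) :
    e s ≤ Real.exp (L * s) * (e 0 + ρ * s) := by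
  refine ht.induction_on (p := fun s => e s ≤ Real.exp (L * s) * (e 0 + ρ * s)) (by simp)
    (fun k hk ih s hs => ?_) hs
  obtain ⟨ha, haT⟩ := ht.node_mem_Icc hk.le
  set a := t k
  have : 0 ≤ e 0 + ρ * a := by positivity
  have hs0 : 0 ≤ s - a := sub_nonneg.2 hs.1.le
  have hear : e a ≤ r := ih.trans (le_trans (by gcongr) hr)
  have hexp : Real.exp (L * s) = Real.exp (L * (s - a)) * Real.exp (L * a) := by
    rw [← Real.exp_add]; ring_nf
  calc e s ≤ (L * (s - a) + 1) * e a + ρ * (s - a) := (hstep k hk hear s hs).trans_eq (by ring)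
    _ ≤ (L * (s - a) + 1) * (Real.exp (L * a) * (e 0 + ρ * a)) + 1 * (ρ * (s - a)) := by
      grw [ih, one_mul]
    _ ≤ Real.exp (L * (s - a)) * (Real.exp (L * a) * (e 0 + ρ * a))
        + Real.exp (L * s) * (ρ * (s - a)) := by
      gcongr
      · exact Real.add_one_le_exp _
      · exact Real.one_le_exp (mul_nonneg hL (ha.trans hs.1.le))
    _ = Real.exp (L * s) * (e 0 + ρ * s) := by rw [hexp]; ring

variable {ι Z : Type*} [NormedAddCommGroup Z] [NormedSpace ℝ Z]

/-- `y` is the continuous, piecewise affine path which the explicit Euler scheme for `ẏ = V(s, y)`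
produces on the partition `t 0 < ⋯ < t N`, starting from `ζ`. -/
structure IsEulerPath (t : ℕ → ℝ) (N : ℕ) (V : ℝ → Z → Z) (ζ : Z) (y : ℝ → Z) : Prop where
  init : y 0 = ζ
  step : ∀ k < N, ∀ s ∈ Ioc (t k) (t (k + 1)), y s = y (t k) + (s - t k) • V (t k) (y (t k))

namespace IsEulerPath

variable {t : ℕ → ℝ} {N : ℕ} {T : ℝ} {V v : ℝ → Z → Z} {ζ z₀ : Z} {y z : ℝ → Z} {L ρ r : ℝ}

lemma continuousOn (hy : IsEulerPath t N V ζ y) (ht : IsPartition t N T) :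
    ContinuousOn y (Icc 0 T) :=
  ht.continuousOn_Icc fun k hk => by
    have haff : ContinuousOn (fun s => y (t k) + (s - t k) • V (t k) (y (t k)))
        (Icc (t k) (t (k + 1))) := by fun_prop
    refine haff.congr fun s hs => ?_
    rcases hs.1.eq_or_lt with rfl | hks
    · simp
    · exact hy.step k hk s ⟨hks, hs.2⟩

variable [CompleteSpace Z]

/-- With `w` the error at the node, the Euler step is compared with the field `v` along the
translated path `z + w`. -/
lemma norm_sub_le_of_step (hy : IsEulerPath t N V ζ y) (ht : IsPartition t N T)
    (hz : IsPrimitive T z₀ z fun s => v s (z s))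
    (hv : IntegrableOn (fun s => v s (z s)) (Ioc 0 T))
    (hLip : ∀ s ∈ Icc 0 T, ∀ w, ‖w‖ ≤ r → ‖v s (z s + w) - v s (z s)‖ ≤ L * ‖w‖)
    (hdefect : ∀ s ∈ Icc 0 T, ∀ w, ‖w‖ ≤ r →
      ‖V (leftNode t N s) (z (leftNode t N s) + w) - v s (z s + w)‖ ≤ ρ)
    {k : ℕ} (hk : k < N) (hkr : ‖y (t k) - z (t k)‖ ≤ r) {s : ℝ}
    (hs : s ∈ Ioc (t k) (t (k + 1))) :
    ‖y s - z s‖ ≤ ‖y (t k) - z (t k)‖ + (s - t k) * (ρ + L * ‖y (t k) - z (t k)‖) := by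
  set a := t k
  set w := y a - z a with hw
  have haT : a ∈ Icc 0 T := ht.node_mem_Icc hk.le
  have hsT : s ∈ Icc 0 T := ht.Icc_node_subset hk (Ioc_subset_Icc_self hs)
  have hya : y a = z a + w := (add_sub_cancel _ _).symm
  have hvas : IntervalIntegrable (fun u => v u (z u)) volume a s :=
    (intervalIntegrable_iff_integrableOn_Ioc_of_le hs.1.le).2
      (hv.mono_set (Ioc_subset_Ioc haT.1 hsT.2))
  have herror : y s - z s = w + ∫ u in a..s, (V a (z a + w) - v u (z u)) := by
    rw [intervalIntegral.integral_sub intervalIntegrable_const hvas,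
      intervalIntegral.integral_const, ← hz.sub_eq_integral hv haT hsT, hy.step k hk s hs, ← hya,
      hw]
    abel
  have hbound : ∀ᵐ u, u ∈ uIoc a s → ‖V a (z a + w) - v u (z u)‖ ≤ ρ + L * ‖w‖ := by
    filter_upwards [Measure.ae_ne volume s] with u hus hu
    rw [uIoc_of_le hs.1.le] at hu
    have huT : u ∈ Icc 0 T := ⟨haT.1.trans hu.1.le, hu.2.trans hsT.2⟩
    have hnode : leftNode t N u = a :=
      ht.leftNode_eq hk ⟨hu.1.le, (hu.2.lt_of_ne hus).trans_le hs.2⟩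
    have hd := hdefect u huT w hkr
    rw [hnode] at hd
    exact (norm_sub_le_norm_sub_add_norm_sub _ (v u (z u + w)) _).trans
      (add_le_add hd (hLip u huT w hkr))
  have hint := intervalIntegral.norm_integral_le_of_norm_le_const_ae hbound
  rw [abs_of_pos (sub_pos.2 hs.1), mul_comm] at hint
  exact herror ▸ (norm_add_le _ _).trans (by gcongr)

lemma norm_sub_le (hy : IsEulerPath t N V ζ y) (ht : IsPartition t N T)
    (hz : IsPrimitive T z₀ z fun s => v s (z s))
    (hv : IntegrableOn (fun s => v s (z s)) (Ioc 0 T)) (hL : 0 ≤ L) (hρ : 0 ≤ ρ)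
    (hLip : ∀ s ∈ Icc 0 T, ∀ w, ‖w‖ ≤ r → ‖v s (z s + w) - v s (z s)‖ ≤ L * ‖w‖)
    (hdefect : ∀ s ∈ Icc 0 T, ∀ w, ‖w‖ ≤ r →
      ‖V (leftNode t N s) (z (leftNode t N s) + w) - v s (z s + w)‖ ≤ ρ)
    (hr : Real.exp (L * T) * (‖ζ - z₀‖ + ρ * T) ≤ r) {s : ℝ} (hs : s ∈ Icc 0 T) :
    ‖y s - z s‖ ≤ Real.exp (L * T) * (‖ζ - z₀‖ + ρ * T) := by
  have he : ‖y 0 - z 0‖ = ‖ζ - z₀‖ := by rw [hy.init, hz.apply_zero (hs.1.trans hs.2)]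
  have hgronwall := ht.le_exp_mul_of_step (e := fun s => ‖y s - z s‖) hL hρ (norm_nonneg _)
    (by rwa [he]) (fun k hk hkr s hs => hy.norm_sub_le_of_step ht hz hv hLip hdefect hk hkr hs) hs
  rw [he] at hgronwall
  have hs0 := hs.1
  exact hgronwall.trans (by gcongr <;> exact hs.2)

end IsEulerPath

lemma tendstoUniformlyOn_of_isEulerPath [CompleteSpace Z] {l : Filter ι} {t : ι → ℕ → ℝ}
    {N : ι → ℕ} {T : ℝ} {V : ι → ℝ → Z → Z} {v : ℝ → Z → Z} {ζ : ι → Z} {z₀ : Z}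
    {y : ι → ℝ → Z} {z : ℝ → Z} {L r : ℝ} (hT : 0 ≤ T)
    (ht : ∀ i, IsPartition (t i) (N i) T)
    (hy : ∀ i, IsEulerPath (t i) (N i) (V i) (ζ i) (y i)) (hζ : Tendsto ζ l (𝓝 z₀))
    (hz : IsPrimitive T z₀ z fun s => v s (z s))
    (hv : IntegrableOn (fun s => v s (z s)) (Ioc 0 T)) (hL : 0 ≤ L) (hr : 0 < r)
    (hLip : ∀ s ∈ Icc 0 T, ∀ w, ‖w‖ ≤ r → ‖v s (z s + w) - v s (z s)‖ ≤ L * ‖w‖)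
    (hV : TendstoUniformlyOn
      (fun i (p : ℝ × Z) => V i (leftNode (t i) (N i) p.1) (z (leftNode (t i) (N i) p.1) + p.2))
      (fun p => v p.1 (z p.1 + p.2)) l (Icc 0 T ×ˢ Metric.closedBall 0 r)) :
    TendstoUniformlyOn y z l (Icc 0 T) := by
  refine Metric.tendstoUniformlyOn_iff.2 fun ε hε => ?_
  set c := Real.exp (L * T) * (1 + T)
  have hc : 0 < c := by positivity
  set δ := min (ε / 2) r / c
  have hδ : 0 < δ := by positivity
  have hcδ : c * δ = min (ε / 2) r := mul_div_cancel₀ _ hc.ne'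
  filter_upwards [Metric.tendsto_nhds.1 hζ δ hδ, Metric.tendstoUniformlyOn_iff.1 hV δ hδ]
    with i hζi hVi s hs
  have hsmall : Real.exp (L * T) * (‖ζ i - z₀‖ + δ * T) ≤ min (ε / 2) r := by
    calc Real.exp (L * T) * (‖ζ i - z₀‖ + δ * T) ≤ Real.exp (L * T) * (δ + δ * T) := by
          gcongr; exact dist_eq_norm (ζ i) z₀ ▸ hζi.le
      _ = min (ε / 2) r := by rw [← hcδ]; ring
  have herror : ‖y i s - z s‖ ≤ Real.exp (L * T) * (‖ζ i - z₀‖ + δ * T) :=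
    (hy i).norm_sub_le (ht i) hz hv hL hδ.le hLip
      (fun s hs w hw => by
        simpa only [dist_eq_norm'] using
          (hVi (s, w) ⟨hs, mem_closedBall_zero_iff.2 hw⟩).le)
      (hsmall.trans (min_le_right _ _)) hs
  rw [dist_comm, dist_eq_norm]
  linarith [min_le_left (ε / 2) r]

end Euler

section Energy

variable {ι E E' : Type*} [NormedAddCommGroup E] [NormedSpace ℝ E]
  [NormedAddCommGroup E'] [NormedSpace ℝ E']

/-- The Euler discretization of the energy `∫ ‖A (ẋ s - F s)‖² ds` on the partition
`t 0 < ⋯ < t N`: difference quotients replace `ẋ`, and the drift `F` is sampled at left nodes. -/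
noncomputable def eulerEnergy (A : E →L[ℝ] E') (t : ℕ → ℝ) (N : ℕ) (x F : ℝ → E) : ℝ :=
  ∑ k ∈ Finset.range N, (t (k + 1) - t k) *
    ‖A ((t (k + 1) - t k)⁻¹ • (x (t (k + 1)) - x (t k)) - F (t k))‖ ^ 2

lemma eulerEnergy_eq_integral [CompleteSpace E] (A : E →L[ℝ] E') {t : ℕ → ℝ} {N : ℕ} {T : ℝ}
    (ht : IsPartition t N T) {x d : ℝ → E} {x₀ : E} (hx : IsPrimitive T x₀ x d)
    (hd : IsStep t N d) (F : ℝ → E) :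
    eulerEnergy A t N x F = ∫ s in Ioc 0 T, ‖A (d s - F (leftNode t N s))‖ ^ 2 := by
  have hstep : IsStep t N fun s => ‖A (d s - F (leftNode t N s))‖ ^ 2 :=
    hd.comp₂ ht.isStep_leftNode fun v u => ‖A (v - F u)‖ ^ 2
  rw [hstep.setIntegral_eq_sum ht]
  refine Finset.sum_congr rfl fun k hk => ?_
  have hk := Finset.mem_range.1 hk
  have htk := ht.lt_succ k hk
  rw [hx.sub_eq_integral (hd.integrableOn ht) (ht.node_mem_Icc hk.le) (ht.node_mem_Icc hk),
    hd.integral_piece hk htk.le, inv_smul_smul₀ (sub_pos.2 htk).ne',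
    ht.leftNode_eq hk ⟨le_rfl, htk⟩, smul_eq_mul]

lemma tendsto_eulerEnergy [CompleteSpace E] (A : E →L[ℝ] E') {l : Filter ι} {t : ι → ℕ → ℝ}
    {N : ι → ℕ} {T : ℝ} (ht : ∀ i, IsPartition (t i) (N i) T) {x d : ι → ℝ → E} {x₀ : ι → E}
    (hx : ∀ i, IsPrimitive T (x₀ i) (x i) (d i)) (hd : ∀ i, IsStep (t i) (N i) (d i))
    {x' : ℝ → E} (hx' : MemLp x' 2 (volume.restrict (Ioc 0 T)))
    (hdx' : Tendsto (fun i => lpNorm (d i - x') 2 (volume.restrict (Ioc 0 T))) l (𝓝 0))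
    {F : ι → ℝ → E} {F₀ : ℝ → E} (hF₀ : MemLp F₀ 2 (volume.restrict (Ioc 0 T)))
    (hF : TendstoUniformlyOn (fun i s => F i (leftNode (t i) (N i) s)) F₀ l (Icc 0 T)) :
    Tendsto (fun i => eulerEnergy A (t i) (N i) (x i) (F i)) l
      (𝓝 (∫ s in Ioc 0 T, ‖A (x' s - F₀ s)‖ ^ 2)) := by
  simp only [eulerEnergy_eq_integral A (ht _) (hx _) (hd _)]
  exact tendsto_integral_norm_sq_clm_sub A (fun i => (hd i).memLp_two (ht i)) hx' hdx'
    (fun i => ((ht i).isStep_leftNode.comp (F i)).memLp_two (ht i)) hF₀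
    (tendsto_lpNorm_sub_of_tendstoUniformlyOn measurableSet_Ioc measure_Ioc_lt_top.ne 2
      (hF.mono Ioc_subset_Icc_self))

end Energy

section VectorFields

variable {α B X Y P W : Type*} [TopologicalSpace α] [UniformSpace B] [UniformSpace X]
  [UniformSpace Y] [UniformSpace P] [UniformSpace W] {g : B → X → Y → P → W} {K : Set α}
  {b : α → B} {x : α → X} {y : α → Y} {θ : P}

lemma continuousOn_field (hg : Continuous fun p : B × X × Y × P => g p.1 p.2.1 p.2.2.1 p.2.2.2)
    (hb : ContinuousOn b K) (hx : ContinuousOn x K) (hy : ContinuousOn y K) :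
    ContinuousOn (fun s => g (b s) (x s) (y s) θ) K :=
  hg.comp_continuousOn (hb.prodMk (hx.prodMk (hy.prodMk continuousOn_const)))

lemma tendstoUniformlyOn_field
    (hg : Continuous fun p : B × X × Y × P => g p.1 p.2.1 p.2.2.1 p.2.2.2) (hK : IsCompact K)
    (hb : ContinuousOn b K) (hx : ContinuousOn x K) (hy : ContinuousOn y K)
    {ι : Type*} {l : Filter ι} {β : ι → α → B} {ξ : ι → α → X} {η : ι → α → Y} {ϑ : ι → P}
    (hβ : TendstoUniformlyOn β b l K) (hξ : TendstoUniformlyOn ξ x l K)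
    (hη : TendstoUniformlyOn η y l K) (hϑ : Tendsto ϑ l (𝓝 θ)) :
    TendstoUniformlyOn (fun i a => g (β i a) (ξ i a) (η i a) (ϑ i))
      (fun a => g (b a) (x a) (y a) θ) l K :=
  tendstoUniformlyOn_continuous_comp hg
    (hK.image_of_continuousOn (hb.prodMk (hx.prodMk (hy.prodMk continuousOn_const))))
    (mapsTo_image _ K)
    (tendstoUniformlyOn_prodMk hβ (tendstoUniformlyOn_prodMk hξ
      (tendstoUniformlyOn_prodMk hη (hϑ.tendstoUniformlyOn_const K))))

end VectorFields

section LogPosterior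

variable {ι E Z P : Type*} [NormedAddCommGroup E] [NormedAddCommGroup Z]
  [SeminormedAddCommGroup P] {l : Filter ι} {T : ℝ}

/-- Continuity at `(a, b, c)`, for the supremum norm on `[0, T]`, of a functional `ψ` of two
continuous paths and a parameter. Paths are functions on `ℝ` of which only the restriction to
`[0, T]` matters. -/
def SupContinuousAt (T : ℝ) (ψ : (ℝ → E) → (ℝ → Z) → P → ℝ≥0) (a : ℝ → E) (b : ℝ → Z) (c : P) :
    Prop :=
  ∀ ε > 0, ∃ δ > 0, ∀ (a' : ℝ → E) (b' : ℝ → Z) (c' : P),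
    ContinuousOn a' (Icc 0 T) → ContinuousOn b' (Icc 0 T) →
    (∀ t ∈ Icc 0 T, ‖a' t - a t‖ ≤ δ) → (∀ t ∈ Icc 0 T, ‖b' t - b t‖ ≤ δ) → ‖c' - c‖ ≤ δ →
    dist (ψ a' b' c') (ψ a b c) ≤ ε

lemma SupContinuousAt.tendsto {ψ : (ℝ → E) → (ℝ → Z) → P → ℝ≥0} {a : ℝ → E} {b : ℝ → Z} {c : P}
    (hψ : SupContinuousAt T ψ a b c) {aᵢ : ι → ℝ → E} {bᵢ : ι → ℝ → Z} {cᵢ : ι → P}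
    (ha : ∀ i, ContinuousOn (aᵢ i) (Icc 0 T)) (hb : ∀ i, ContinuousOn (bᵢ i) (Icc 0 T))
    (halim : TendstoUniformlyOn aᵢ a l (Icc 0 T)) (hblim : TendstoUniformlyOn bᵢ b l (Icc 0 T))
    (hclim : Tendsto cᵢ l (𝓝 c)) :
    Tendsto (fun i => ψ (aᵢ i) (bᵢ i) (cᵢ i)) l (𝓝 (ψ a b c)) := by
  refine Metric.tendsto_nhds.2 fun ε hε => ?_
  obtain ⟨δ, hδ, hψδ⟩ := hψ (ε / 2) (half_pos hε)
  filter_upwards [Metric.tendstoUniformlyOn_iff.1 halim δ hδ,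
    Metric.tendstoUniformlyOn_iff.1 hblim δ hδ, Metric.tendsto_nhds.1 hclim δ hδ]
    with i hai hbi hci
  exact (hψδ _ _ _ (ha i) (hb i) (fun s hs => dist_eq_norm' (a s) _ ▸ (hai s hs).le)
    (fun s hs => dist_eq_norm' (b s) _ ▸ (hbi s hs).le) (dist_eq_norm (cᵢ i) c ▸ hci.le)).trans_lt
      (half_lt_self hε)

lemma memLp_two_of_continuousOn {F : ℝ → E} (hF : ContinuousOn F (Icc 0 T)) :
    MemLp F 2 (volume.restrict (Ioc 0 T)) :=
  (memLp_two_iff_integrable_sq_norm (hF.integrableOn_Icc.mono_set Ioc_subset_Icc_self).1).2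
    ((hF.norm.pow 2).integrableOn_Icc.mono_set Ioc_subset_Icc_self)

variable {t : ι → ℕ → ℝ} {N : ι → ℕ} {x : ℝ → E} {xt : ι → ℝ → E}

lemma tendstoUniformlyOn_comp_leftNode (ht : ∀ i, IsPartition (t i) (N i) T)
    (hmesh : Tendsto (fun i => mesh (t i) (N i)) l (𝓝 0)) (hx : ContinuousOn x (Icc 0 T))
    (hxt : TendstoUniformlyOn xt x l (Icc 0 T)) :
    TendstoUniformlyOn (fun i s => xt i (leftNode (t i) (N i) s)) x l (Icc 0 T) :=
  tendstoUniformlyOn_comp_of_tendstoUniformlyOn_id hxt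
    (isCompact_Icc.uniformContinuousOn_of_continuous hx)
    (.of_forall fun i s _ => (ht i).leftNode_mem_Icc s) (tendstoUniformlyOn_leftNode ht hmesh)

lemma tendstoUniformlyOn_cleanState [NormedSpace ℝ Z] [ProperSpace Z] {z : ℝ → Z}
    {zt : ι → ℝ → Z} {θ : P} {ϑ : ι → P} {h : ℝ → E → Z → P → Z}
    (hh : Continuous fun p : ℝ × E × Z × P => h p.1 p.2.1 p.2.2.1 p.2.2.2) (hT : 0 ≤ T)
    (ht : ∀ i, IsPartition (t i) (N i) T)
    (hmesh : Tendsto (fun i => mesh (t i) (N i)) l (𝓝 0)) (hx : ContinuousOn x (Icc 0 T))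
    (hxt : TendstoUniformlyOn xt x l (Icc 0 T)) (hϑ : Tendsto ϑ l (𝓝 θ))
    (hzc : ContinuousOn z (Icc 0 T)) {z₀ : Z} (hz : IsPrimitive T z₀ z fun s => h s (x s) (z s) θ)
    {L r : ℝ} (hL : 0 ≤ L) (hr : 0 < r)
    (hLip : ∀ s ∈ Icc 0 T, ∀ w, ‖w‖ ≤ r →
      ‖h s (x s) (z s + w) θ - h s (x s) (z s) θ‖ ≤ L * ‖w‖)
    {ζ : ι → Z} (hζ : Tendsto ζ l (𝓝 z₀))
    (hzt : ∀ i, IsEulerPath (t i) (N i) (fun s w => h s (xt i s) w (ϑ i)) (ζ i) (zt i)) :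
    TendstoUniformlyOn zt z l (Icc 0 T) := by
  have hv : IntegrableOn (fun s => h s (x s) (z s) θ) (Ioc 0 T) :=
    (continuousOn_field hh continuousOn_id hx hzc).integrableOn_Icc.mono_set Ioc_subset_Icc_self
  refine tendstoUniformlyOn_of_isEulerPath (v := fun s w => h s (x s) w θ) hT ht hzt hζ hz
    hv hL hr hLip ?_
  set K := Icc 0 T ×ˢ Metric.closedBall (0 : Z) r
  have hK : IsCompact K := isCompact_Icc.prod (isCompact_closedBall 0 r)
  have hfst : MapsTo Prod.fst K (Icc 0 T) := fun p hp => hp.1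
  have hsnd : TendstoUniformlyOn (fun (_ : ι) (p : ℝ × Z) => p.2) Prod.snd l K := fun u hu =>
    .of_forall fun _ _ _ => refl_mem_uniformity hu
  exact tendstoUniformlyOn_field hh hK continuousOn_fst (hx.comp continuousOn_fst hfst)
    ((hzc.comp continuousOn_fst hfst).add continuousOn_snd)
    (((tendstoUniformlyOn_leftNode ht hmesh).comp Prod.fst).mono hfst)
    (((tendstoUniformlyOn_comp_leftNode ht hmesh hx hxt).comp Prod.fst).mono hfst)
    ((((tendstoUniformlyOn_comp_leftNode ht hmesh hzc
      (fun u hu => .of_forall fun _ _ _ => refl_mem_uniformity hu)).comp Prod.fst).mono hfst).add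
        hsnd) hϑ

lemma tendsto_zero_of_add_tendsto_zero {a b : ι → ℝ} (ha : ∀ i, 0 ≤ a i) (hb : ∀ i, 0 ≤ b i)
    (hab : Tendsto (fun i => a i + b i) l (𝓝 0)) : Tendsto a l (𝓝 0) ∧ Tendsto b l (𝓝 0) :=
  ⟨squeeze_zero ha (fun i => le_add_of_nonneg_right (hb i)) hab,
    squeeze_zero hb (fun i => le_add_of_nonneg_left (ha i)) hab⟩

end LogPosterior

theorem stmt7_general {ι E E' Z P : Type*} [NormedAddCommGroup E] [NormedSpace ℝ E]
    [CompleteSpace E] [NormedAddCommGroup E'] [NormedSpace ℝ E'] [NormedAddCommGroup Z]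
    [NormedSpace ℝ Z] [ProperSpace Z] [SeminormedAddCommGroup P] {l : Filter ι}
    {T : ℝ} (hT : 0 ≤ T) {t : ι → ℕ → ℝ} {N : ι → ℕ} (ht : ∀ i, IsPartition (t i) (N i) T)
    (hmesh : Tendsto (fun i => mesh (t i) (N i)) l (𝓝 0))
    {f : ℝ → E → Z → P → E} {h : ℝ → E → Z → P → Z}
    (hf : Continuous fun p : ℝ × E × Z × P => f p.1 p.2.1 p.2.2.1 p.2.2.2)
    (hh : Continuous fun p : ℝ × E × Z × P => h p.1 p.2.1 p.2.2.1 p.2.2.2)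
    (A : E →L[ℝ] E')
    {x x' : ℝ → E} (hx : IsPrimitive T (x 0) x x') (hx' : MemLp x' 2 (volume.restrict (Ioc 0 T)))
    {θ : P} {z₀ : Z} {z : ℝ → Z} (hzc : ContinuousOn z (Icc 0 T))
    (hz : IsPrimitive T z₀ z fun s => h s (x s) (z s) θ)
    {L r : ℝ} (hL : 0 ≤ L) (hr : 0 < r)
    (hLip : ∀ s ∈ Icc 0 T, ∀ w, ‖w‖ ≤ r →
      ‖h s (x s) (z s + w) θ - h s (x s) (z s) θ‖ ≤ L * ‖w‖)
    {ψ : (ℝ → E) → (ℝ → Z) → P → ℝ≥0} (hψ : SupContinuousAt T ψ x z θ)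
    {π : E → Z → P → ℝ≥0}
    (hπ : ContinuousAt (fun p : E × Z × P => π p.1 p.2.1 p.2.2) (x 0, z₀, θ))
    {xt d : ι → ℝ → E} (hxt : ∀ i, IsPrimitive T (xt i 0) (xt i) (d i))
    (hd : ∀ i, IsStep (t i) (N i) (d i)) {ζ : ι → Z} {ϑ : ι → P}
    (hconv : Tendsto (fun i => w2Norm T (xt i - x) (d i - x') + ‖ζ i - z₀‖ + ‖ϑ i - θ‖) l (𝓝 0))
    {zt : ι → ℝ → Z}
    (hzt : ∀ i, IsEulerPath (t i) (N i) (fun s w => h s (xt i s) w (ϑ i)) (ζ i) (zt i)) :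
    Tendsto (fun i =>
      elog (ψ (xt i) (zt i) (ϑ i)) + elog (π (xt i 0) (ζ i) (ϑ i))
        - ((1 / 2 * eulerEnergy A (t i) (N i) (xt i)
            fun s => f s (xt i s) (zt i s) (ϑ i) : ℝ) : EReal)) l
      (𝓝 (elog (ψ x z θ) + elog (π (x 0) z₀ θ)
        - ((1 / 2 * ∫ s in Ioc 0 T, ‖A (x' s - f s (x s) (z s) θ)‖ ^ 2 : ℝ) : EReal))) := by
  have hdL2 i : MemLp (d i) 2 (volume.restrict (Ioc 0 T)) := (hd i).memLp_two (ht i)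
  obtain ⟨hxζ, hϑ⟩ := tendsto_zero_of_add_tendsto_zero
    (fun _ => add_nonneg (Real.sqrt_nonneg _) (norm_nonneg _)) (fun _ => norm_nonneg _) hconv
  obtain ⟨hw2, hζ⟩ := tendsto_zero_of_add_tendsto_zero
    (fun _ => Real.sqrt_nonneg _) (fun _ => norm_nonneg _) hxζ
  rw [← tendsto_iff_norm_sub_tendsto_zero] at hϑ hζ
  have hxc : ContinuousOn x (Icc 0 T) := hx.continuousOn (hx'.integrable one_le_two)
  have hxlim : TendstoUniformlyOn xt x l (Icc 0 T) :=
    IsPrimitive.tendstoUniformlyOn_of_w2Norm hxt hx hdL2 hx' hw2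
  have hzlim : TendstoUniformlyOn zt z l (Icc 0 T) :=
    tendstoUniformlyOn_cleanState hh hT ht hmesh hxc hxlim hϑ hzc hz hL hr hLip hζ hzt
  have hψlim := hψ.tendsto (fun i => (hxt i).continuousOn ((hd i).integrableOn (ht i)))
    (fun i => (hzt i).continuousOn (ht i)) hxlim hzlim hϑ
  have hπlim : Tendsto (fun i => π (xt i 0) (ζ i) (ϑ i)) l (𝓝 (π (x 0) z₀ θ)) :=
    hπ.tendsto.comp ((hxlim.tendsto_at ⟨le_rfl, hT⟩).prodMk_nhds (hζ.prodMk_nhds hϑ))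
  have hdrift : TendstoUniformlyOn _ (fun s => f s (x s) (z s) θ) l (Icc 0 T) :=
    tendstoUniformlyOn_field hf isCompact_Icc continuousOn_id hxc hzc
      (tendstoUniformlyOn_leftNode ht hmesh) (tendstoUniformlyOn_comp_leftNode ht hmesh hxc hxlim)
      (tendstoUniformlyOn_comp_leftNode ht hmesh hzc hzlim) hϑ
  have henergy := tendsto_eulerEnergy (F := fun i s => f s (xt i s) (zt i s) (ϑ i))
    (F₀ := fun s => f s (x s) (z s) θ) A ht hxt hd hx'
    (squeeze_zero (fun _ => lpNorm_nonneg)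
      (fun i => lpNorm_two_le_w2Norm (xt i - x) ((hdL2 i).sub hx').1) hw2)
    (memLp_two_of_continuousOn (continuousOn_field hf continuousOn_id hxc hzc)) hdrift
  exact tendsto_elog_add_elog_sub_coe (NNReal.tendsto_coe.2 hψlim) (NNReal.tendsto_coe.2 hπlim)
    (henergy.const_mul _)

/-- continuous convergence of the Euler-discretized log-posteriors:
if `(x̃_i, ζ_i, ϑ_i) → (x, z₀, θ)` in `W²_n × ℝ^q × ℝ^m` with `ϑ_i ∈ S` and
`x̃_i ∈ PL(𝒫_i)`, then `ℓ̃_i(x̃_i, ζ_i, ϑ_i) → ℓ_e(x, z₀, θ)` in `ℝ̄`.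
Piecewise linear paths are encoded by their piecewise constant derivatives `d i`,
`W²` functions by function–derivative pairs, and `z̃_i`, `z` are the Euler-discretized
clean-state paths resp. the solution of the clean-state ODE. -/
theorem stmt7 {n q m : ℕ} (tf : ℝ) (htf : 0 < tf)
    -- nested partitions with vanishing mesh
    (N : ℕ → ℕ) (hN1 : ∀ i, 1 ≤ N i) (tP : ℕ → ℕ → ℝ)
    (htP0 : ∀ i, tP i 0 = 0) (htPN : ∀ i, tP i (N i) = tf)
    (htPmono : ∀ i, ∀ k < N i, tP i k < tP i (k + 1))
    (hnested : ∀ i, ∀ k ≤ N i, ∃ k' ≤ N (i + 1), tP (i + 1) k' = tP i k)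
    (hmesh : Tendsto (fun i => ⨆ k : Fin (N i), (tP i (k.1 + 1) - tP i k.1))
      atTop (nhds 0))
    -- closed parameter set
    (S : Set (EuclideanSpace ℝ (Fin m))) (hS : IsClosed S)
    -- dynamics and their regularity
    (f : ℝ → EuclideanSpace ℝ (Fin n) → EuclideanSpace ℝ (Fin q) →
      EuclideanSpace ℝ (Fin m) → EuclideanSpace ℝ (Fin n))
    (h : ℝ → EuclideanSpace ℝ (Fin n) → EuclideanSpace ℝ (Fin q) →
      EuclideanSpace ℝ (Fin m) → EuclideanSpace ℝ (Fin q))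
    (hfc : Continuous fun p : ℝ × EuclideanSpace ℝ (Fin n) × EuclideanSpace ℝ (Fin q) ×
      EuclideanSpace ℝ (Fin m) => f p.1 p.2.1 p.2.2.1 p.2.2.2)
    (hhc : Continuous fun p : ℝ × EuclideanSpace ℝ (Fin n) × EuclideanSpace ℝ (Fin q) ×
      EuclideanSpace ℝ (Fin m) => h p.1 p.2.1 p.2.2.1 p.2.2.2)
    (ρf ρh : ℝ → ℝ)
    (hρ : Tendsto (fun ε => ρf ε + ρh ε) (nhdsWithin 0 (Ioi 0)) (nhds 0))
    (hfu : ∀ ε > (0:ℝ), ∀ t ∈ Icc (0:ℝ) tf, ∀ t' ∈ Icc (0:ℝ) tf,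
      ∀ (a a' : EuclideanSpace ℝ (Fin n)) (b b' : EuclideanSpace ℝ (Fin q))
        (c c' : EuclideanSpace ℝ (Fin m)), c ∈ S → c' ∈ S →
      |t - t'| ≤ ε → ‖a - a'‖ ≤ ε → ‖b - b'‖ ≤ ε → ‖c - c'‖ ≤ ε →
      ‖f t a b c - f t' a' b' c'‖ ≤ ρf ε)
    (hhu : ∀ ε > (0:ℝ), ∀ t ∈ Icc (0:ℝ) tf, ∀ t' ∈ Icc (0:ℝ) tf,
      ∀ (a a' : EuclideanSpace ℝ (Fin n)) (b b' : EuclideanSpace ℝ (Fin q))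
        (c c' : EuclideanSpace ℝ (Fin m)), c ∈ S → c' ∈ S →
      |t - t'| ≤ ε → ‖a - a'‖ ≤ ε → ‖b - b'‖ ≤ ε → ‖c - c'‖ ≤ ε →
      ‖h t a b c - h t' a' b' c'‖ ≤ ρh ε)
    (Lf Lh : EuclideanSpace ℝ (Fin m) → ℝ)
    (hLf : ∀ θ ∈ S, 0 < Lf θ) (hLh : ∀ θ ∈ S, 0 < Lh θ)
    (hfLip : ∀ θ ∈ S, ∀ t ∈ Icc (0:ℝ) tf,
      ∀ (a a' : EuclideanSpace ℝ (Fin n)) (b b' : EuclideanSpace ℝ (Fin q)),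
      ‖f t a b θ - f t a' b' θ‖ ≤ Lf θ * (‖a - a'‖ + ‖b - b'‖))
    (hhLip : ∀ θ ∈ S, ∀ t ∈ Icc (0:ℝ) tf,
      ∀ (a a' : EuclideanSpace ℝ (Fin n)) (b b' : EuclideanSpace ℝ (Fin q)),
      ‖h t a b θ - h t a' b' θ‖ ≤ Lh θ * (‖a - a'‖ + ‖b - b'‖))
    -- measurement likelihood: nonnegative, continuous w.r.t. the supremum norms
    (ψ : (ℝ → EuclideanSpace ℝ (Fin n)) → (ℝ → EuclideanSpace ℝ (Fin q)) →
      EuclideanSpace ℝ (Fin m) → ℝ)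
    (hψ0 : ∀ a b c, 0 ≤ ψ a b c)
    (hψc : ∀ (a : ℝ → EuclideanSpace ℝ (Fin n)) (b : ℝ → EuclideanSpace ℝ (Fin q))
      (c : EuclideanSpace ℝ (Fin m)), ContinuousOn a (Icc 0 tf) →
      ContinuousOn b (Icc 0 tf) → ∀ ε > (0:ℝ), ∃ δ > (0:ℝ),
      ∀ (a' : ℝ → EuclideanSpace ℝ (Fin n)) (b' : ℝ → EuclideanSpace ℝ (Fin q))
        (c' : EuclideanSpace ℝ (Fin m)), ContinuousOn a' (Icc 0 tf) →
        ContinuousOn b' (Icc 0 tf) →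
        (∀ t ∈ Icc (0:ℝ) tf, ‖a' t - a t‖ ≤ δ) →
        (∀ t ∈ Icc (0:ℝ) tf, ‖b' t - b t‖ ≤ δ) → ‖c' - c‖ ≤ δ →
        |ψ a' b' c' - ψ a b c| ≤ ε)
    -- prior: nonnegative, continuous, vanishing outside `int S`
    (pr : EuclideanSpace ℝ (Fin n) → EuclideanSpace ℝ (Fin q) →
      EuclideanSpace ℝ (Fin m) → ℝ)
    (hpr0 : ∀ a b c, 0 ≤ pr a b c)
    (hprc : Continuous fun p : EuclideanSpace ℝ (Fin n) × EuclideanSpace ℝ (Fin q) ×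
      EuclideanSpace ℝ (Fin m) => pr p.1 p.2.1 p.2.2)
    (hprv : ∀ a b c, c ∉ interior S → pr a b c = 0)
    -- invertible diffusion matrix
    (G : EuclideanSpace ℝ (Fin n) ≃L[ℝ] EuclideanSpace ℝ (Fin n))
    -- the limit point `(x, z₀, θ)` with `θ ∈ S`
    (x x' : ℝ → EuclideanSpace ℝ (Fin n))
    (hInt : IntegrableOn x' (Icc 0 tf))
    (hL2 : IntegrableOn (fun t => ‖x' t‖ ^ 2) (Icc 0 tf))
    (hAC : ∀ t ∈ Icc (0:ℝ) tf, x t = x 0 + ∫ s in Ioc (0:ℝ) t, x' s)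
    (z0 : EuclideanSpace ℝ (Fin q))
    (θ : EuclideanSpace ℝ (Fin m)) (hθS : θ ∈ S)
    -- the solution of the clean-state ODE at the limit point
    (z : ℝ → EuclideanSpace ℝ (Fin q)) (hzc : ContinuousOn z (Icc 0 tf))
    (hz : ∀ t ∈ Icc (0:ℝ) tf, z t = z0 + ∫ s in Ioc (0:ℝ) t, h s (x s) (z s) θ)
    -- the approximating sequence, `x̃_i ∈ PL(𝒫_i)` with derivative `d i`, `ϑ_i ∈ S`
    (xt d : ℕ → ℝ → EuclideanSpace ℝ (Fin n))
    (hdpc : ∀ i, ∀ k < N i, ∃ b : EuclideanSpace ℝ (Fin n),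
      ∀ s ∈ Ico (tP i k) (tP i (k + 1)), d i s = b)
    (hxtAC : ∀ i, ∀ s ∈ Icc (0:ℝ) tf, xt i s = xt i 0 + ∫ u in Ioc (0:ℝ) s, d i u)
    (ζ : ℕ → EuclideanSpace ℝ (Fin q)) (ϑ : ℕ → EuclideanSpace ℝ (Fin m))
    (hϑS : ∀ i, ϑ i ∈ S)
    (hconv : Tendsto (fun i =>
      Real.sqrt (‖xt i 0 - x 0‖ ^ 2 + ∫ s in Ioc (0:ℝ) tf, ‖d i s - x' s‖ ^ 2)
      + ‖ζ i - z0‖ + ‖ϑ i - θ‖) atTop (nhds 0))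
    -- the associated Euler-discretized clean-state paths
    (zt : ℕ → ℝ → EuclideanSpace ℝ (Fin q))
    (hzt0 : ∀ i, zt i 0 = ζ i)
    (hztrec : ∀ i, ∀ k < N i, ∀ s ∈ Ioc (tP i k) (tP i (k + 1)),
      zt i s = zt i (tP i k) +
        (s - tP i k) • h (tP i k) (xt i (tP i k)) (zt i (tP i k)) (ϑ i)) :
    Tendsto (fun i =>
      elog (ψ (xt i) (zt i) (ϑ i)) + elog (pr (xt i 0) (ζ i) (ϑ i))
        - ((((1:ℝ) / 2) * ∑ k ∈ Finset.range (N i), (tP i (k + 1) - tP i k) *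
            ‖G.symm ((tP i (k + 1) - tP i k)⁻¹ • (xt i (tP i (k + 1)) - xt i (tP i k))
              - f (tP i k) (xt i (tP i k)) (zt i (tP i k)) (ϑ i))‖ ^ 2 : ℝ) : EReal))
      atTop
      (nhds (elog (ψ x z θ) + elog (pr (x 0) z0 θ)
        - ((((1:ℝ) / 2) * ∫ t in Ioc (0:ℝ) tf,
            ‖G.symm (x' t - f t (x t) (z t) θ)‖ ^ 2 : ℝ) : EReal))) := by
  have hx' : MemLp x' 2 (volume.restrict (Ioc 0 tf)) :=
    (memLp_two_iff_integrable_sq_norm (hInt.mono_set Ioc_subset_Icc_self).1).2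
      (hL2.mono_set Ioc_subset_Icc_self)
  have hxc : ContinuousOn x (Icc 0 tf) := IsPrimitive.continuousOn hAC (hx'.integrable one_le_two)
  lift ψ to (ℝ → EuclideanSpace ℝ (Fin n)) → (ℝ → EuclideanSpace ℝ (Fin q)) →
    EuclideanSpace ℝ (Fin m) → ℝ≥0 using hψ0
  lift pr to EuclideanSpace ℝ (Fin n) → EuclideanSpace ℝ (Fin q) →
    EuclideanSpace ℝ (Fin m) → ℝ≥0 using hpr0
  exact stmt7_general htf.le (fun i => ⟨htP0 i, htPN i, htPmono i⟩) hmesh hfc hhc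
    G.symm.toContinuousLinearMap hAC hx' hzc hz (hLh θ hθS).le one_pos
    (fun s hs w _ => by simpa using hhLip θ hθS s hs (x s) (x s) (z s + w) (z s))
    (hψc x z θ hxc hzc) (NNReal.isEmbedding_coe.continuous_iff.2 hprc).continuousAt hxtAC
    (fun i => isStep_of_forall_exists_eq (hdpc i)) hconv (fun i => ⟨hzt0 i, hztrec i⟩)
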